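/- arXiv:2006.01498 — 5 statements merged into one kernel-verified Lean document; each statement's English description precedes it below -/
import Mathlib

section
/- Propagation of the algebraic symmetries (Lemma 2.6): suppose K_ij, Γ_ijb, f_i^j and additional smooth functions f^b_j : ℝ⁴ → ℝ satisfy the equations (E-K), (E-Γ), (E-f) and (E-f⁻¹) at every point of ℝ⁴. If at t = 0, for all x ∈ ℝ³ and all indices, K_ij = K_ji, Γ_ijb = −Γ_ibj, Σ_j f_i^j f^b_j = δ_i^b and Σ_b f^b_j f_b^i = δ_j^i, then these four families of identities hold at every point of ℝ⁴. -/
open scoped BigOperators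

noncomputable section

/-- Points of `ℝ⁴ = ℝ_t × ℝ³`; coordinate `0` is time. -/
abbrev Pt : Type := Fin 4 → ℝ

/-- Coordinate partial derivative `∂_μ u`. -/
def pd (μ : Fin 4) (u : Pt → ℝ) (p : Pt) : ℝ := fderiv ℝ u p (Pi.single μ 1)

/-- Frame derivative `e_i u = Σ_j f_i^j ∂_j u` along the spatial frame `f`. -/
def fr (f : Fin 3 → Fin 3 → Pt → ℝ) (i : Fin 3) (u : Pt → ℝ) (p : Pt) : ℝ :=
  ∑ j : Fin 3, f i j p * pd j.succ u p

/-- `tr K = Σ_c K_cc`. -/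
def trK (K : Fin 3 → Fin 3 → Pt → ℝ) (p : Pt) : ℝ := ∑ c : Fin 3, K c c p

/-- `|K|² = Σ_{i,j} (K_ij)²`. -/
def nK2 (K : Fin 3 → Fin 3 → Pt → ℝ) (p : Pt) : ℝ :=
  ∑ i : Fin 3, ∑ j : Fin 3, (K i j p) ^ 2

/-- `|Γ|² = Σ_{i,j,b} (Γ_ijb)²`. -/
def nG2 (G : Fin 3 → Fin 3 → Fin 3 → Pt → ℝ) (p : Pt) : ℝ :=
  ∑ i : Fin 3, ∑ j : Fin 3, ∑ b : Fin 3, (G i j b p) ^ 2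

/-- Kronecker delta. -/
def kd (i j : Fin 3) : ℝ := if i = j then 1 else 0

/-- The modified evolution equation (E-K) for `K_ij` at the point `p`. -/
def EK (f K : Fin 3 → Fin 3 → Pt → ℝ) (G : Fin 3 → Fin 3 → Fin 3 → Pt → ℝ)
    (i j : Fin 3) (p : Pt) : Prop :=
  pd 0 (K i j) p + trK K p * K i j p =
    (1 / 2) * ( fr f i (fun q => ∑ b : Fin 3, G b j b q) p
      - (∑ b : Fin 3, fr f b (G i j b) p)
      + (∑ b : Fin 3, ∑ c : Fin 3, G b i c p * G c j b p)
      + (∑ b : Fin 3, ∑ c : Fin 3, G b b c p * G i j c p)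
      + fr f j (fun q => ∑ b : Fin 3, G b i b q) p
      - (∑ b : Fin 3, fr f b (G j i b) p)
      + (∑ b : Fin 3, ∑ c : Fin 3, G b j c p * G c i b p)
      + (∑ b : Fin 3, ∑ c : Fin 3, G b b c p * G j i c p) )
    - (1 / 2) * kd i j *
      ( 2 * (∑ a : Fin 3, fr f a (fun q => ∑ b : Fin 3, G b a b q) p)
      + (∑ b : Fin 3, ∑ a : Fin 3, ∑ c : Fin 3, G b a c p * G c a b p)
      + (∑ c : Fin 3, (∑ b : Fin 3, G b b c p) * (∑ a : Fin 3, G a a c p))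
      + nK2 K p - (trK K p) ^ 2 )

/-- The unmodified evolution equation (E-K₀) for `K_ij` at the point `p`. -/
def EK0 (f K : Fin 3 → Fin 3 → Pt → ℝ) (G : Fin 3 → Fin 3 → Fin 3 → Pt → ℝ)
    (i j : Fin 3) (p : Pt) : Prop :=
  pd 0 (K i j) p + trK K p * K i j p =
    (1 / 2) * ( fr f i (fun q => ∑ b : Fin 3, G b j b q) p
      - (∑ b : Fin 3, fr f b (G i j b) p)
      + (∑ b : Fin 3, ∑ c : Fin 3, G b i c p * G c j b p)
      + (∑ b : Fin 3, ∑ c : Fin 3, G b b c p * G i j c p)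
      + fr f j (fun q => ∑ b : Fin 3, G b i b q) p
      - (∑ b : Fin 3, fr f b (G j i b) p)
      + (∑ b : Fin 3, ∑ c : Fin 3, G b j c p * G c i b p)
      + (∑ b : Fin 3, ∑ c : Fin 3, G b b c p * G j i c p) )

/-- The modified evolution equation (E-Γ) for `Γ_ijb` at the point `p`. -/
def EG (f K : Fin 3 → Fin 3 → Pt → ℝ) (G : Fin 3 → Fin 3 → Fin 3 → Pt → ℝ)
    (i j b : Fin 3) (p : Pt) : Prop :=
  pd 0 (G i j b) p + (∑ c : Fin 3, K i c p * G c j b p) =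
    fr f j (K b i) p - fr f b (K j i) p
    - (∑ c : Fin 3, G j b c p * K c i p) - (∑ c : Fin 3, G j i c p * K b c p)
    + (∑ c : Fin 3, G b j c p * K c i p) + (∑ c : Fin 3, G b i c p * K j c p)
    + kd i b * ( (∑ c : Fin 3, fr f c (K c j) p)
      - (∑ c : Fin 3, ∑ l : Fin 3, G c c l p * K l j p)
      - (∑ c : Fin 3, ∑ l : Fin 3, G c j l p * K c l p)
      - fr f j (trK K) p )
    - kd i j * ( (∑ c : Fin 3, fr f c (K c b) p)
      - (∑ c : Fin 3, ∑ l : Fin 3, G c c l p * K l b p)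
      - (∑ c : Fin 3, ∑ l : Fin 3, G c b l p * K c l p)
      - fr f b (trK K) p )

/-- The unmodified evolution equation (E-Γ₀) for `Γ_ijb` at the point `p`. -/
def EG0 (f K : Fin 3 → Fin 3 → Pt → ℝ) (G : Fin 3 → Fin 3 → Fin 3 → Pt → ℝ)
    (i j b : Fin 3) (p : Pt) : Prop :=
  pd 0 (G i j b) p + (∑ c : Fin 3, K i c p * G c j b p) =
    fr f j (K b i) p - fr f b (K j i) p
    - (∑ c : Fin 3, G j b c p * K c i p) - (∑ c : Fin 3, G j i c p * K b c p)
    + (∑ c : Fin 3, G b j c p * K c i p) + (∑ c : Fin 3, G b i c p * K j c p)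

/-- The frame evolution equation (E-f) at every point. -/
def Ef (f K : Fin 3 → Fin 3 → Pt → ℝ) : Prop :=
  ∀ (i j : Fin 3) (p : Pt), pd 0 (f i j) p + (∑ c : Fin 3, K i c p * f c j p) = 0

/-- The inverse frame evolution equation (E-f⁻¹) at every point. -/
def Efi (fi K : Fin 3 → Fin 3 → Pt → ℝ) : Prop :=
  ∀ (b j : Fin 3) (p : Pt), pd 0 (fi b j) p - (∑ c : Fin 3, K c b p * fi c j p) = 0

/-- Torsion components `C_ijb = Σ_l f^b_l (e_i f_j^l − e_j f_i^l) − Γ_ijb + Γ_jib`. -/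
def Tor (f fi : Fin 3 → Fin 3 → Pt → ℝ) (G : Fin 3 → Fin 3 → Fin 3 → Pt → ℝ)
    (i j b : Fin 3) (p : Pt) : ℝ :=
  (∑ l : Fin 3, fi b l p * (fr f i (f j l) p - fr f j (f i l) p)) - G i j b p + G j i b p

/-- Spatial covariant derivative `D̃_j K_bi = e_j K_bi − Σ_l Γ_jbl K_li − Σ_l Γ_jil K_bl`. -/
def DtK (f K : Fin 3 → Fin 3 → Pt → ℝ) (G : Fin 3 → Fin 3 → Fin 3 → Pt → ℝ)
    (j b i : Fin 3) (p : Pt) : ℝ :=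
  fr f j (K b i) p - (∑ l : Fin 3, G j b l p * K l i p) - (∑ l : Fin 3, G j i l p * K b l p)

/-- `R̂_b0 = Σ_i D̃_i K_bi − e_b (tr K)`. -/
def Rb0 (f K : Fin 3 → Fin 3 → Pt → ℝ) (G : Fin 3 → Fin 3 → Fin 3 → Pt → ℝ)
    (b : Fin 3) (p : Pt) : ℝ :=
  (∑ i : Fin 3, DtK f K G i b i p) - fr f b (trK K) p

/-- Modified spatial curvature `R̂_aijb`. -/
def Rhat (f : Fin 3 → Fin 3 → Pt → ℝ) (G : Fin 3 → Fin 3 → Fin 3 → Pt → ℝ)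
    (a i j b : Fin 3) (p : Pt) : ℝ :=
  fr f a (G i j b) p - fr f i (G a j b) p
  - (∑ c : Fin 3, G a b c p * G i j c p)
  + (∑ c : Fin 3, G i b c p * G a j c p)
  - (∑ c : Fin 3, (G a i c p - G i a c p) * G c j b p)

/-- Modified spatial Ricci contraction `r̂_ij = Σ_b R̂_bijb`. -/
def rhat (f : Fin 3 → Fin 3 → Pt → ℝ) (G : Fin 3 → Fin 3 → Fin 3 → Pt → ℝ)
    (i j : Fin 3) (p : Pt) : ℝ :=
  ∑ b : Fin 3, Rhat f G b i j b p

/-- Spatial covariant derivative of the torsion, `D̃_j C_aib`. -/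
def DtC (f fi : Fin 3 → Fin 3 → Pt → ℝ) (G : Fin 3 → Fin 3 → Fin 3 → Pt → ℝ)
    (j a i b : Fin 3) (p : Pt) : ℝ :=
  fr f j (Tor f fi G a i b) p
  - (∑ l : Fin 3, G j a l p * Tor f fi G l i b p)
  - (∑ l : Fin 3, G j i l p * Tor f fi G a l b p)
  - (∑ l : Fin 3, G j b l p * Tor f fi G a i l p)

/-!
The defects `K_ij - K_ji`, `Γ_ijb + Γ_ibj` and `Σ_b f^b_j f_b^i - δ_j^i` vanish at `t = 0`. The
right-hand side of (E-K) is symmetric in `i, j` and that of (E-Γ) is antisymmetric in `j, b`, so all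
spatial derivatives cancel from the evolution of the defects: along each line of constant `x` they
solve linear homogeneous ODEs, with coefficients `-tr K`, `-K_ic` and `0` respectively, and vanish
by uniqueness. A left inverse of a `3 × 3` matrix is also a right inverse.
-/

theorem eq_zero_of_hasDerivAt_clm {E : Type*} [NormedAddCommGroup E] [NormedSpace ℝ E]
    {A : ℝ → E →L[ℝ] E} (hA : Continuous A) {u : ℝ → E} {t₀ : ℝ}
    (hu : ∀ t, HasDerivAt u (A t (u t)) t) (h₀ : u t₀ = 0) : u = 0 := by
  ext t
  obtain ⟨a, b, ht, ht₀⟩ : ∃ a b, t ∈ Set.Ioo a b ∧ t₀ ∈ Set.Ioo a b :=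
    ⟨min t t₀ - 1, max t t₀ + 1, by grind, by grind⟩
  obtain ⟨C, hC⟩ := (isCompact_Icc (a := a) (b := b)).bddAbove_image hA.nnnorm.continuousOn
  have hLip : ∀ s ∈ Set.Ioo a b, LipschitzOnWith C (A s) Set.univ := fun s hs ↦
    ((A s).lipschitz.weaken (hC ⟨s, Set.Ioo_subset_Icc_self hs, rfl⟩)).lipschitzOnWith
  have hzero (s : ℝ) : HasDerivAt (0 : ℝ → E) (A s 0) s := by simp
  exact ODE_solution_unique_of_mem_Ioo (v := fun s x ↦ A s x) hLip ht₀
    (fun s _ ↦ ⟨hu s, trivial⟩) (fun s _ ↦ ⟨hzero s, trivial⟩) h₀ ht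

theorem eq_zero_of_hasDerivAt_mulVec {n : Type*} [Fintype n] {M : ℝ → Matrix n n ℝ}
    (hM : Continuous M) {u : ℝ → n → ℝ} {t₀ : ℝ}
    (hu : ∀ t, HasDerivAt u ((M t).mulVec (u t)) t) (h₀ : u t₀ = 0) : u = 0 := by
  have hA : Continuous fun t ↦ (M t).mulVecLin.toContinuousLinearMap :=
    continuous_clm_apply.2 fun x ↦ hM.matrix_mulVec continuous_const
  exact eq_zero_of_hasDerivAt_clm hA hu h₀

section PartialDerivative

variable {μ : Fin 4} {u v : Pt → ℝ} {p : Pt}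

theorem pd_add (hu : DifferentiableAt ℝ u p) (hv : DifferentiableAt ℝ v p) :
    pd μ (fun q ↦ u q + v q) p = pd μ u p + pd μ v p := by
  simp only [pd, fderiv_fun_add hu hv, add_apply]

theorem pd_sub (hu : DifferentiableAt ℝ u p) (hv : DifferentiableAt ℝ v p) :
    pd μ (fun q ↦ u q - v q) p = pd μ u p - pd μ v p := by
  simp only [pd, fderiv_fun_sub hu hv, sub_apply]

theorem pd_sub_const (c : ℝ) : pd μ (fun q ↦ u q - c) p = pd μ u p := by
  simp only [pd, fderiv_sub_const]

theorem pd_mul (hu : DifferentiableAt ℝ u p) (hv : DifferentiableAt ℝ v p) :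
    pd μ (fun q ↦ u q * v q) p = u p * pd μ v p + pd μ u p * v p := by
  simp [pd, fderiv_fun_mul hu hv, mul_comm]

theorem pd_sum {ι : Type*} {s : Finset ι} {w : ι → Pt → ℝ}
    (hw : ∀ k ∈ s, DifferentiableAt ℝ (w k) p) :
    pd μ (fun q ↦ ∑ k ∈ s, w k q) p = ∑ k ∈ s, pd μ (w k) p := by
  simp only [pd, fderiv_fun_sum hw, sum_apply]

theorem hasDerivAt_comp_update {t : ℝ} (hu : DifferentiableAt ℝ u (Function.update p μ t)) :
    HasDerivAt (fun s ↦ u (Function.update p μ s)) (pd μ u (Function.update p μ t)) t :=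
  hu.hasFDerivAt.comp_hasDerivAt t (hasDerivAt_update p μ t)

theorem eq_zero_of_pd_eq_sum {n : Type*} [Fintype n] {a : n → n → Pt → ℝ} {u : n → Pt → ℝ} {c : ℝ}
    (ha : ∀ k l, Continuous (a k l)) (hu : ∀ k, Differentiable ℝ (u k))
    (hpd : ∀ k p, pd μ (u k) p = ∑ l, a k l p * u l p)
    (h₀ : ∀ k p, p μ = c → u k p = 0) (k : n) (p : Pt) : u k p = 0 := by
  have hM : Continuous fun t : ℝ ↦ Matrix.of fun k l ↦ a k l (Function.update p μ t) :=
    continuous_matrix fun k l ↦ (ha k l).comp (continuous_const.update μ continuous_id)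
  have hline : (fun t k ↦ u k (Function.update p μ t)) = 0 :=
    eq_zero_of_hasDerivAt_mulVec hM (t₀ := c)
      (fun t ↦ hasDerivAt_pi.2 fun k ↦
        (hasDerivAt_comp_update (hu k _)).congr_deriv (hpd k _))
      (funext fun k ↦ h₀ k _ (Function.update_self ..))
  simpa using congrFun₂ hline (p μ) k

theorem eq_zero_of_pd_eq_mul {a : Pt → ℝ} {c : ℝ} (ha : Continuous a) (hu : Differentiable ℝ u)
    (hpd : ∀ p, pd μ u p = a p * u p) (h₀ : ∀ p, p μ = c → u p = 0) (p : Pt) : u p = 0 :=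
  eq_zero_of_pd_eq_sum (n := Unit) (fun _ _ ↦ ha) (fun _ ↦ hu) (by simpa using hpd)
    (fun _ ↦ h₀) () p

end PartialDerivative

theorem kd_comm (i j : Fin 3) : kd i j = kd j i := by
  simp only [kd, eq_comm]

theorem sum_mul_eq_kd_of_left_inverse {A B : Fin 3 → Fin 3 → ℝ}
    (h : ∀ j i, ∑ b, B b j * A b i = kd j i) (i b : Fin 3) : ∑ j, A i j * B b j = kd i b := by
  have hleft : (Matrix.of B).transpose * Matrix.of A = 1 := Matrix.ext h
  have hright : Matrix.of A * (Matrix.of B).transpose = 1 := mul_eq_one_comm.1 hleft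
  exact congrFun₂ hright i b

section Propagation

variable {f fi K : Fin 3 → Fin 3 → Pt → ℝ} {G : Fin 3 → Fin 3 → Fin 3 → Pt → ℝ}

theorem pd_sub_pd_swap_of_EK {i j : Fin 3} {p : Pt} (hij : EK f K G i j p)
    (hji : EK f K G j i p) :
    pd 0 (K i j) p - pd 0 (K j i) p = -trK K p * (K i j p - K j i p) := by
  unfold EK at hij hji
  rw [kd_comm j i] at hji
  linarith

theorem pd_add_pd_swap_of_EG {i j b : Fin 3} {p : Pt} (hjb : EG f K G i j b p)
    (hbj : EG f K G i b j p) :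
    pd 0 (G i j b) p + pd 0 (G i b j) p = ∑ c, -K i c p * (G c j b p + G c b j p) := by
  unfold EG at hjb hbj
  simp only [neg_mul, mul_add, Finset.sum_neg_distrib, Finset.sum_add_distrib]
  linarith

theorem pd_sum_mul_eq_zero_of_Ef_of_Efi (hf : ∀ i j, Differentiable ℝ (f i j))
    (hfi : ∀ i j, Differentiable ℝ (fi i j)) (hEf : Ef f K) (hEfi : Efi fi K)
    (j i : Fin 3) (p : Pt) : pd 0 (fun q ↦ ∑ b, fi b j q * f b i q) p = 0 := by
  have hf' (b : Fin 3) : pd 0 (f b i) p = -∑ c, K b c p * f c i p :=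
    eq_neg_of_add_eq_zero_left (hEf b i p)
  have hfi' (b : Fin 3) : pd 0 (fi b j) p = ∑ c, K c b p * fi c j p := sub_eq_zero.1 (hEfi b j p)
  calc pd 0 (fun q ↦ ∑ b, fi b j q * f b i q) p
      = ∑ b, (fi b j p * pd 0 (f b i) p + pd 0 (fi b j) p * f b i p) := by
        rw [pd_sum fun b _ ↦ (hfi b j p).fun_mul (hf b i p)]
        exact Finset.sum_congr rfl fun b _ ↦ pd_mul (hfi b j p) (hf b i p)
    _ = ∑ b, ∑ c, K c b p * fi c j p * f b i p - ∑ b, ∑ c, fi b j p * (K b c p * f c i p) := by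
        simp only [hf', hfi', mul_neg, Finset.mul_sum, Finset.sum_mul, neg_add_eq_sub,
          Finset.sum_sub_distrib]
    _ = 0 := by
        rw [Finset.sum_comm, sub_eq_zero]
        exact Finset.sum_congr rfl fun b _ ↦ Finset.sum_congr rfl fun c _ ↦ by ring

theorem symm_of_EK (hK : ∀ i j, Differentiable ℝ (K i j)) (hEK : ∀ i j p, EK f K G i j p)
    (h₀ : ∀ p : Pt, p 0 = 0 → ∀ i j, K i j p = K j i p) (p : Pt) (i j : Fin 3) :
    K i j p = K j i p := by
  have htr : Continuous (trK K) := continuous_finsetSum _ fun c _ ↦ (hK c c).continuous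
  refine sub_eq_zero.1 <| eq_zero_of_pd_eq_mul (μ := 0) htr.neg ((hK i j).sub (hK j i))
    (fun q ↦ ?_) (fun q hq ↦ sub_eq_zero.2 (h₀ q hq i j)) p
  exact (pd_sub (hK i j q) (hK j i q)).trans (pd_sub_pd_swap_of_EK (hEK i j q) (hEK j i q))

theorem antisymm_of_EG (hK : ∀ i j, Continuous (K i j)) (hG : ∀ i j b, Differentiable ℝ (G i j b))
    (hEG : ∀ i j b p, EG f K G i j b p)
    (h₀ : ∀ p : Pt, p 0 = 0 → ∀ i j b, G i j b p = -G i b j p) (p : Pt) (i j b : Fin 3) :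
    G i j b p = -G i b j p := by
  refine eq_neg_of_add_eq_zero_left <| eq_zero_of_pd_eq_sum (μ := 0)
    (u := fun i q ↦ G i j b q + G i b j q) (fun i c ↦ (hK i c).neg)
    (fun i ↦ (hG i j b).add (hG i b j)) (fun i q ↦ ?_)
    (fun i q hq ↦ add_eq_zero_iff_eq_neg.2 (h₀ q hq i j b)) i p
  exact (pd_add (hG i j b q) (hG i b j q)).trans
    (pd_add_pd_swap_of_EG (hEG i j b q) (hEG i b j q))

theorem sum_mul_eq_kd_of_Ef_of_Efi (hf : ∀ i j, Differentiable ℝ (f i j))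
    (hfi : ∀ i j, Differentiable ℝ (fi i j)) (hEf : Ef f K) (hEfi : Efi fi K)
    (h₀ : ∀ p : Pt, p 0 = 0 → ∀ j i, ∑ b, fi b j p * f b i p = kd j i)
    (p : Pt) (j i : Fin 3) : ∑ b, fi b j p * f b i p = kd j i := by
  have hdiff : Differentiable ℝ fun q ↦ ∑ b, fi b j q * f b i q :=
    Differentiable.fun_sum fun b _ ↦ (hfi b j).mul (hf b i)
  refine sub_eq_zero.1 <| eq_zero_of_pd_eq_mul (μ := 0) (a := 0) continuous_zero
    (hdiff.sub_const (kd j i)) (fun q ↦ ?_) (fun q hq ↦ sub_eq_zero.2 (h₀ q hq j i)) p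
  rw [pd_sub_const, pd_sum_mul_eq_zero_of_Ef_of_Efi hf hfi hEf hEfi, Pi.zero_apply, zero_mul]

theorem propagation_of_symmetries_general
    (hf : ∀ i j, Differentiable ℝ (f i j)) (hfi : ∀ i j, Differentiable ℝ (fi i j))
    (hK : ∀ i j, Differentiable ℝ (K i j)) (hG : ∀ i j b, Differentiable ℝ (G i j b))
    (hEK : ∀ i j p, EK f K G i j p) (hEG : ∀ i j b p, EG f K G i j b p)
    (hEf : Ef f K) (hEfi : Efi fi K)
    (h0K : ∀ p : Pt, p 0 = 0 → ∀ i j, K i j p = K j i p)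
    (h0G : ∀ p : Pt, p 0 = 0 → ∀ i j b, G i j b p = -G i b j p)
    (h0inv : ∀ p : Pt, p 0 = 0 → ∀ j i, ∑ b, fi b j p * f b i p = kd j i) :
    (∀ p i j, K i j p = K j i p) ∧
    (∀ p i j b, G i j b p = -G i b j p) ∧
    (∀ p i b, ∑ j, f i j p * fi b j p = kd i b) ∧
    (∀ p j i, ∑ b, fi b j p * f b i p = kd j i) := by
  have hinv := sum_mul_eq_kd_of_Ef_of_Efi hf hfi hEf hEfi h0inv
  exact ⟨symm_of_EK hK hEK h0K,
    antisymm_of_EG (fun i j ↦ (hK i j).continuous) hG hEG h0G,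
    fun p ↦ sum_mul_eq_kd_of_left_inverse (hinv p), hinv⟩

end Propagation

/-- Lemma 2.6: propagation of the algebraic symmetries by the
modified reduced system. -/
theorem propagation_of_symmetries
    (f fi K : Fin 3 → Fin 3 → Pt → ℝ) (G : Fin 3 → Fin 3 → Fin 3 → Pt → ℝ)
    (hf : ∀ i j, ContDiff ℝ (⊤ : ℕ∞) (f i j)) (hfi : ∀ i j, ContDiff ℝ (⊤ : ℕ∞) (fi i j))
    (hK : ∀ i j, ContDiff ℝ (⊤ : ℕ∞) (K i j)) (hG : ∀ i j b, ContDiff ℝ (⊤ : ℕ∞) (G i j b))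
    (hEK : ∀ (i j : Fin 3) (p : Pt), EK f K G i j p)
    (hEG : ∀ (i j b : Fin 3) (p : Pt), EG f K G i j b p)
    (hEf : Ef f K) (hEfi : Efi fi K)
    (h0K : ∀ p : Pt, p 0 = 0 → ∀ i j : Fin 3, K i j p = K j i p)
    (h0G : ∀ p : Pt, p 0 = 0 → ∀ i j b : Fin 3, G i j b p = - G i b j p)
    (h0inv1 : ∀ p : Pt, p 0 = 0 → ∀ i b : Fin 3, (∑ j : Fin 3, f i j p * fi b j p) = kd i b)
    (h0inv2 : ∀ p : Pt, p 0 = 0 → ∀ j i : Fin 3, (∑ b : Fin 3, fi b j p * f b i p) = kd j i) :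
    (∀ (p : Pt) (i j : Fin 3), K i j p = K j i p) ∧
    (∀ (p : Pt) (i j b : Fin 3), G i j b p = - G i b j p) ∧
    (∀ (p : Pt) (i b : Fin 3), (∑ j : Fin 3, f i j p * fi b j p) = kd i b) ∧
    (∀ (p : Pt) (j i : Fin 3), (∑ b : Fin 3, fi b j p * f b i p) = kd j i) := by
  have hd {u : Pt → ℝ} (hu : ContDiff ℝ (⊤ : ℕ∞) u) : Differentiable ℝ u :=
    hu.differentiable (by simp)
  exact propagation_of_symmetries_general (fun i j ↦ hd (hf i j)) (fun i j ↦ hd (hfi i j))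
    (fun i j ↦ hd (hK i j)) (fun i j b ↦ hd (hG i j b)) hEK hEG hEf hEfi h0K h0G h0inv2
end
end

section
/- Symmetric-hyperbolic structure of the linearized modified ADM system (Lemma 2.7): let K_ij, Γ_ijb : ℝ⁴ → ℝ be smooth with K_ij = K_ji and Γ_ijb = −Γ_ibj everywhere, satisfying the linear constant-coefficient system ∂_t K_ij = ½[ ∂_i Γ_bjb − ∂_b Γ_ijb + ∂_j Γ_bib − ∂_b Γ_jib ] − δ_ij ∂_a Γ_bab and ∂_t Γ_ijb = ∂_j K_bi − ∂_b K_ji + δ_ib ( ∂_c K_cj − ∂_j (tr K) ) − δ_ij ( ∂_c K_cb − ∂_b (tr K) ) at every point of ℝ⁴. Then the energy identity ∂_t ( ½|K|² + ¼|Γ|² ) = Σ_k ∂_k F_k holds at every point, where F_k := Σ_{i,b} K_ik Γ_bib − (tr K) Σ_b Γ_bkb − Σ_{i,j} Γ_ijk K_ji. -/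
open scoped BigOperators

noncomputable section

/-!
Write `V_j = Σ_b Γ_bjb` and `W_j = Σ_c ∂_c K_cj - ∂_j (tr K)`. Pairing the symmetric `K` with its
evolution equation undoes the symmetrization in `i, j` and leaves
`Σ K_ij (∂_i V_j - Σ_b ∂_b Γ_ijb) - (tr K) Σ_a ∂_a V_a`. The right-hand side of the equation for `Γ`
is the antisymmetrization in `j, b` of `δ_ib W_j - ∂_b K_ji`, so pairing it with `Γ` leaves
`Σ V_j W_j - Σ Γ_ijb ∂_b K_ji`. In the sum of the two, each derivative of `Γ` multiplied by a
component of `K` meets its partner under the product rule: the modification by `W` supplies the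
partners of the terms in `∂V`, so the total is a divergence.
-/

section Algebra

variable {ι R : Type*} [Fintype ι]

theorem sum_symm_mul_add_swap [NonAssocSemiring R] {k : ι → ι → R} (hk : ∀ i j, k i j = k j i)
    (s : ι → ι → R) :
    ∑ i, ∑ j, k i j * (s i j + s j i) = 2 * ∑ i, ∑ j, k i j * s i j := by
  have swap : ∑ i, ∑ j, k i j * s j i = ∑ i, ∑ j, k i j * s i j := by
    rw [Finset.sum_comm]
    exact Finset.sum_congr rfl fun i _ => Finset.sum_congr rfl fun j _ => by rw [hk]
  simp only [mul_add, Finset.sum_add_distrib, swap, two_mul]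

theorem sum_antisymm_mul_sub_swap [NonAssocRing R] {g : ι → ι → R} (hg : ∀ i j, g i j = -g j i)
    (t : ι → ι → R) :
    ∑ i, ∑ j, g i j * (t i j - t j i) = 2 * ∑ i, ∑ j, g i j * t i j := by
  have swap : ∑ i, ∑ j, g i j * t j i = -∑ i, ∑ j, g i j * t i j := by
    rw [Finset.sum_comm]
    simp only [← Finset.sum_neg_distrib, ← neg_mul, ← hg]
  simp only [mul_sub, Finset.sum_sub_distrib, swap, sub_neg_eq_add, two_mul]

theorem sum_symm_mul_symmetrize_sub_trace [DecidableEq ι] [Field R] [NeZero (2 : R)]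
    {k : ι → ι → R} (hk : ∀ i j, k i j = k j i) (s : ι → ι → R) (c : R) :
    ∑ i, ∑ j, k i j * (1 / 2 * (s i j + s j i) - (if i = j then 1 else 0) * c) =
      ∑ i, ∑ j, k i j * s i j - (∑ i, k i i) * c := by
  have two : (2 : R) ≠ 0 := two_ne_zero
  have contract_delta : ∑ i, ∑ j, k i j * ((if i = j then 1 else 0) * c) = (∑ i, k i i) * c := by
    simp [Finset.sum_mul]
  simp only [mul_sub, Finset.sum_sub_distrib, contract_delta, mul_left_comm _ (1 / 2 : R),
    ← Finset.mul_sum, sum_symm_mul_add_swap hk]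
  field_simp

theorem half_sum_antisymm_mul_antisymmetrize [DecidableEq ι] [Field R] [NeZero (2 : R)]
    {g : ι → ι → ι → R} (hg : ∀ i j b, g i j b = -g i b j) (a : ι → ι → ι → R) (w : ι → R) :
    1 / 2 * ∑ i, ∑ j, ∑ b, g i j b * (a i b j - a i j b
        + (if i = b then 1 else 0) * w j - (if i = j then 1 else 0) * w b) =
      ∑ j, (∑ b, g b j b) * w j - ∑ i, ∑ j, ∑ b, g i j b * a i j b := by
  have two : (2 : R) ≠ 0 := two_ne_zero
  have fold_antisymm (i : ι) : ∑ j, ∑ b, g i j b * (a i b j - a i j b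
        + (if i = b then 1 else 0) * w j - (if i = j then 1 else 0) * w b) =
      2 * ∑ j, ∑ b, g i j b * ((if i = b then 1 else 0) * w j - a i j b) := by
    rw [← sum_antisymm_mul_sub_swap (hg i)]
    refine Finset.sum_congr rfl fun j _ => Finset.sum_congr rfl fun b _ => ?_
    ring
  have contract_delta : ∑ i, ∑ j, ∑ b, g i j b * ((if i = b then 1 else 0) * w j) =
      ∑ j, (∑ b, g b j b) * w j := by
    rw [Finset.sum_comm]
    simp [Finset.sum_mul]
  simp only [fold_antisymm, ← Finset.mul_sum]
  simp only [mul_sub, Finset.sum_sub_distrib, contract_delta]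
  field_simp

end Algebra

section Calculus

variable {𝕜 E ι : Type*} [NontriviallyNormedField 𝕜] [NormedAddCommGroup E] [NormedSpace 𝕜 E]
  [Fintype ι]

theorem fderiv_fun_sum_apply {F : Type*} [NormedAddCommGroup F] [NormedSpace 𝕜 F] {u : ι → E → F}
    {p : E} (hu : ∀ i, DifferentiableAt 𝕜 (u i) p) (v : E) :
    fderiv 𝕜 (fun q => ∑ i, u i q) p v = ∑ i, fderiv 𝕜 (u i) p v := by
  simp [fderiv_fun_sum fun i _ => hu i]

theorem fderiv_fun_sq_apply {u : E → 𝕜} {p : E} (hu : DifferentiableAt 𝕜 u p) (v : E) :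
    fderiv 𝕜 (fun q => u q ^ 2) p v = 2 * (u p * fderiv 𝕜 u p v) := by
  simp [fderiv_fun_pow 2 hu, mul_assoc]

/-- The trace `tr K = Σ_c K_cc` of the second fundamental form. -/
def meanCurvature (K : ι → ι → E → 𝕜) (q : E) : 𝕜 := ∑ c, K c c q

/-- The contraction `V_j = Σ_b Γ_bjb` of the connection coefficients: up to sign the
only nonzero trace of a `Γ` that is antisymmetric in its last two indices. -/
def connectionTrace (Γ : ι → ι → ι → E → 𝕜) (j : ι) (q : E) : 𝕜 := ∑ b, Γ b j b q

/-- The linearized momentum constraint `W_j = Σ_c ∂_c K_cj - ∂_j (tr K)`, where `∂_c` is the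
derivative in the direction `e c`. Its multiples are what the modified system adds to the evolution
of `Γ`. -/
def momentumConstraint (e : ι → E) (K : ι → ι → E → 𝕜) (p : E) (j : ι) : 𝕜 :=
  ∑ c, fderiv 𝕜 (K c j) p (e c) - fderiv 𝕜 (meanCurvature K) p (e j)

/-- The energy density `½|K|² + ¼|Γ|²`. The weight of `Γ` is half that of `K` because antisymmetry
in the last two indices makes every component of `Γ` occur twice in `|Γ|²`. -/
def energyDensity (K : ι → ι → E → 𝕜) (Γ : ι → ι → ι → E → 𝕜) (q : E) : 𝕜 :=
  1 / 2 * ∑ i, ∑ j, K i j q ^ 2 + 1 / 4 * ∑ i, ∑ j, ∑ b, Γ i j b q ^ 2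

/-- The `k`-th component `F_k = Σ_i K_ik V_i - (tr K) V_k - Σ_ij Γ_ijk K_ji` of the energy flux,
whose spatial divergence is the time derivative of the energy density. -/
def energyFlux (K : ι → ι → E → 𝕜) (Γ : ι → ι → ι → E → 𝕜) (k : ι) (q : E) : 𝕜 :=
  ∑ i, K i k q * connectionTrace Γ i q - meanCurvature K q * connectionTrace Γ k q
    - ∑ i, ∑ j, Γ i j k q * K j i q

variable {K : ι → ι → E → 𝕜} {Γ : ι → ι → ι → E → 𝕜} {p : E}

theorem differentiableAt_meanCurvature (hK : ∀ c, DifferentiableAt 𝕜 (K c c) p) :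
    DifferentiableAt 𝕜 (meanCurvature K) p :=
  DifferentiableAt.fun_sum fun c _ => hK c

theorem differentiableAt_connectionTrace {j : ι} (hΓ : ∀ b, DifferentiableAt 𝕜 (Γ b j b) p) :
    DifferentiableAt 𝕜 (connectionTrace Γ j) p :=
  DifferentiableAt.fun_sum fun b _ => hΓ b

theorem fderiv_energyDensity_apply [NeZero (2 : 𝕜)] (hK : ∀ i j, DifferentiableAt 𝕜 (K i j) p)
    (hΓ : ∀ i j b, DifferentiableAt 𝕜 (Γ i j b) p) (v : E) :
    fderiv 𝕜 (energyDensity K Γ) p v =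
      ∑ i, ∑ j, K i j p * fderiv 𝕜 (K i j) p v
        + 1 / 2 * ∑ i, ∑ j, ∑ b, Γ i j b p * fderiv 𝕜 (Γ i j b) p v := by
  have two : (2 : 𝕜) ≠ 0 := two_ne_zero
  have four : (4 : 𝕜) = 2 * 2 := by norm_num
  unfold energyDensity
  rw [fderiv_fun_add (by fun_prop) (by fun_prop), fderiv_const_mul (by fun_prop),
    fderiv_const_mul (by fun_prop)]
  simp only [add_apply, smul_apply, smul_eq_mul]
  simp (disch := fun_prop) only [fderiv_fun_sum_apply, fderiv_fun_sq_apply, ← Finset.mul_sum]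
  rw [four]
  field_simp

theorem fderiv_energyFlux_apply (hK : ∀ i j, DifferentiableAt 𝕜 (K i j) p)
    (hΓ : ∀ i j b, DifferentiableAt 𝕜 (Γ i j b) p) (k : ι) (v : E) :
    fderiv 𝕜 (energyFlux K Γ k) p v =
      ∑ i, (K i k p * fderiv 𝕜 (connectionTrace Γ i) p v
          + connectionTrace Γ i p * fderiv 𝕜 (K i k) p v)
        - (meanCurvature K p * fderiv 𝕜 (connectionTrace Γ k) p v
          + connectionTrace Γ k p * fderiv 𝕜 (meanCurvature K) p v)
        - ∑ i, ∑ j, (Γ i j k p * fderiv 𝕜 (K j i) p v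
          + K j i p * fderiv 𝕜 (Γ i j k) p v) := by
  have hT : DifferentiableAt 𝕜 (meanCurvature K) p := differentiableAt_meanCurvature fun c => hK c c
  have hV (j : ι) : DifferentiableAt 𝕜 (connectionTrace Γ j) p :=
    differentiableAt_connectionTrace fun b => hΓ b j b
  unfold energyFlux
  rw [fderiv_fun_sub (by fun_prop) (by fun_prop), fderiv_fun_sub (by fun_prop) (by fun_prop),
    fderiv_fun_mul hT (hV k)]
  simp only [add_apply, sub_apply, smul_apply, smul_eq_mul]
  simp (disch := fun_prop) only [fderiv_fun_sum_apply, fderiv_fun_mul, add_apply, smul_apply,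
    smul_eq_mul]

theorem sum_fderiv_energyFlux (e : ι → E) (hK : ∀ i j, DifferentiableAt 𝕜 (K i j) p)
    (hΓ : ∀ i j b, DifferentiableAt 𝕜 (Γ i j b) p) (hKsymm : ∀ i j, K i j = K j i) :
    ∑ k, fderiv 𝕜 (energyFlux K Γ k) p (e k) =
      (∑ i, ∑ j, K i j p *
          (fderiv 𝕜 (connectionTrace Γ j) p (e i) - ∑ b, fderiv 𝕜 (Γ i j b) p (e b))
        - meanCurvature K p * ∑ a, fderiv 𝕜 (connectionTrace Γ a) p (e a))
      + (∑ j, connectionTrace Γ j p * momentumConstraint e K p j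
        - ∑ i, ∑ j, ∑ b, Γ i j b p * fderiv 𝕜 (K j i) p (e b)) := by
  have trace_curvature : ∑ k, ∑ i, K i k p * fderiv 𝕜 (connectionTrace Γ i) p (e k) =
      ∑ i, ∑ j, K i j p * fderiv 𝕜 (connectionTrace Γ j) p (e i) :=
    Finset.sum_congr rfl fun k _ => Finset.sum_congr rfl fun i _ => by rw [hKsymm]
  have momentum : ∑ k, ∑ i, connectionTrace Γ i p * fderiv 𝕜 (K i k) p (e k) =
      ∑ j, connectionTrace Γ j p * ∑ c, fderiv 𝕜 (K c j) p (e c) := by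
    rw [Finset.sum_comm]
    refine Finset.sum_congr rfl fun j _ => ?_
    simp only [Finset.mul_sum, hKsymm j]
  have rotate (f : ι → ι → ι → 𝕜) : ∑ k, ∑ i, ∑ j, f i j k = ∑ i, ∑ j, ∑ k, f i j k :=
    Finset.sum_comm_cycle.symm
  have ricci : ∑ k, ∑ i, ∑ j, K j i p * fderiv 𝕜 (Γ i j k) p (e k) =
      ∑ i, ∑ j, K i j p * ∑ b, fderiv 𝕜 (Γ i j b) p (e b) := by
    simp only [rotate fun i j k => K j i p * fderiv 𝕜 (Γ i j k) p (e k), Finset.mul_sum]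
    exact Finset.sum_congr rfl fun i _ => Finset.sum_congr rfl fun j _ => by rw [hKsymm]
  simp only [fderiv_energyFlux_apply hK hΓ, momentumConstraint, Finset.sum_add_distrib,
    Finset.sum_sub_distrib, mul_sub, ← Finset.mul_sum, trace_curvature, momentum, ricci]
  rw [rotate fun i j k => Γ i j k p * fderiv 𝕜 (K j i) p (e k)]
  ring

theorem linearized_energy_identity_general [DecidableEq ι] [NeZero (2 : 𝕜)] (τ : E) (e : ι → E)
    (hK : ∀ i j, DifferentiableAt 𝕜 (K i j) p) (hΓ : ∀ i j b, DifferentiableAt 𝕜 (Γ i j b) p)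
    (hKsymm : ∀ i j, K i j = K j i) (hΓanti : ∀ i j b, Γ i j b p = -Γ i b j p)
    (hKeq : ∀ i j, fderiv 𝕜 (K i j) p τ =
      1 / 2 * (fderiv 𝕜 (connectionTrace Γ j) p (e i) - ∑ b, fderiv 𝕜 (Γ i j b) p (e b)
          + fderiv 𝕜 (connectionTrace Γ i) p (e j) - ∑ b, fderiv 𝕜 (Γ j i b) p (e b))
        - (if i = j then 1 else 0) * ∑ a, fderiv 𝕜 (connectionTrace Γ a) p (e a))
    (hΓeq : ∀ i j b, fderiv 𝕜 (Γ i j b) p τ =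
      fderiv 𝕜 (K b i) p (e j) - fderiv 𝕜 (K j i) p (e b)
        + (if i = b then 1 else 0) * momentumConstraint e K p j
        - (if i = j then 1 else 0) * momentumConstraint e K p b) :
    fderiv 𝕜 (energyDensity K Γ) p τ = ∑ k, fderiv 𝕜 (energyFlux K Γ k) p (e k) := by
  have curvature_rate : ∑ i, ∑ j, K i j p * fderiv 𝕜 (K i j) p τ =
      ∑ i, ∑ j, K i j p *
          (fderiv 𝕜 (connectionTrace Γ j) p (e i) - ∑ b, fderiv 𝕜 (Γ i j b) p (e b))
        - meanCurvature K p * ∑ a, fderiv 𝕜 (connectionTrace Γ a) p (e a) := by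
    simp only [hKeq, add_sub_assoc]
    exact sum_symm_mul_symmetrize_sub_trace (fun i j => congrFun (hKsymm i j) p) _ _
  have connection_rate : 1 / 2 * ∑ i, ∑ j, ∑ b, Γ i j b p * fderiv 𝕜 (Γ i j b) p τ =
      ∑ j, connectionTrace Γ j p * momentumConstraint e K p j
        - ∑ i, ∑ j, ∑ b, Γ i j b p * fderiv 𝕜 (K j i) p (e b) := by
    simp only [hΓeq]
    exact half_sum_antisymm_mul_antisymmetrize hΓanti (fun i j b => fderiv 𝕜 (K j i) p (e b)) _
  rw [fderiv_energyDensity_apply hK hΓ, curvature_rate, connection_rate,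
    sum_fderiv_energyFlux e hK hΓ hKsymm]

end Calculus

/-- Lemma 2.7: energy identity for the linearized modified ADM system. -/
theorem linearized_energy_identity
    (K : Fin 3 → Fin 3 → Pt → ℝ) (G : Fin 3 → Fin 3 → Fin 3 → Pt → ℝ)
    (hK : ∀ i j, ContDiff ℝ (⊤ : ℕ∞) (K i j)) (hG : ∀ i j b, ContDiff ℝ (⊤ : ℕ∞) (G i j b))
    (hKsym : ∀ (i j : Fin 3) (p : Pt), K i j p = K j i p)
    (hGanti : ∀ (i j b : Fin 3) (p : Pt), G i j b p = - G i b j p)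
    (heqK : ∀ (i j : Fin 3) (p : Pt), pd 0 (K i j) p =
      (1 / 2) * ( pd i.succ (fun q => ∑ b : Fin 3, G b j b q) p
        - (∑ b : Fin 3, pd b.succ (G i j b) p)
        + pd j.succ (fun q => ∑ b : Fin 3, G b i b q) p
        - (∑ b : Fin 3, pd b.succ (G j i b) p) )
      - kd i j * (∑ a : Fin 3, pd a.succ (fun q => ∑ b : Fin 3, G b a b q) p))
    (heqG : ∀ (i j b : Fin 3) (p : Pt), pd 0 (G i j b) p =
      pd j.succ (K b i) p - pd b.succ (K j i) p
      + kd i b * ((∑ c : Fin 3, pd c.succ (K c j) p) - pd j.succ (trK K) p)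
      - kd i j * ((∑ c : Fin 3, pd c.succ (K c b) p) - pd b.succ (trK K) p)) :
    ∀ p : Pt,
      pd 0 (fun q => (1 / 2) * nK2 K q + (1 / 4) * nG2 G q) p
        = ∑ k : Fin 3, pd k.succ
            (fun q => (∑ i : Fin 3, K i k q * (∑ b : Fin 3, G b i b q))
              - trK K q * (∑ b : Fin 3, G b k b q)
              - (∑ i : Fin 3, ∑ j : Fin 3, G i j k q * K j i q)) p :=
  fun p => linearized_energy_identity_general (Pi.single 0 1) (fun k : Fin 3 => Pi.single k.succ 1)
    (fun i j => (hK i j).differentiable (by simp) p)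
    (fun i j b => (hG i j b).differentiable (by simp) p) (fun i j => funext (hKsym i j))
    (fun i j b => hGanti i j b p) (fun i j => heqK i j p) fun i j b => heqG i j b p
end
end

section
/- Favourable sign of the boundary terms in the energy estimate (key step in the proof of local well-posedness, Proposition 2.11): let K : {1,2,3}² → ℝ satisfy K_ij = K_ji and let Γ : {1,2,3}³ → ℝ satisfy Γ_ijb = −Γ_ibj for all indices. Then Σ_{i,b} K_i3 Γ_bib − (tr K) Σ_b Γ_b3b − Σ_{i,j} Γ_ij3 K_ji ≤ ½ Σ_{i,j} (K_ij)² + ¼ Σ_{i,j,b} (Γ_ijb)². -/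
open scoped BigOperators

noncomputable section

/-! Write `n` for the normal index. By antisymmetry of `Γ`, the boundary terms are the sum over all
pairs `(a, b)` of `K_an Γ_bab + K_aa Γ_bbn - K_ab Γ_ban`, and this summand vanishes unless `a`, `b`
and `n` are distinct. For distinct indices, Young's inequality bounds it by entries from row `a` of
`K` and from the antisymmetric slab `Γ_b··`, which contains each of its three entries twice up to
sign. In dimension `N` every `a ≠ n` has `N - 2` partners `b`, hence the constant `1` for `N = 3`.
-/

open Finset

/-- The contribution of an ordered pair of indices `(a, b)` to the boundary terms, where `n` is the
direction normal to the boundary; its sum over all pairs is the boundary expression. -/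
def boundaryPairTerm {ι R : Type*} [Ring R] (K : ι → ι → R) (G : ι → ι → ι → R) (n a b : ι) : R :=
  K a n * G b a b + K a a * G b b n - K a b * G b a n

section PairTerm

variable {ι R : Type*} [CommRing R] (K : ι → ι → R) {G : ι → ι → ι → R}

theorem boundary_terms_eq_sum_boundaryPairTerm [Fintype ι]
    (hG : ∀ i j b, G i j b = -G i b j) (n : ι) :
    (∑ i, ∑ b, K i n * G b i b) - (∑ i, K i i) * (∑ b, G b n b) - (∑ i, ∑ j, G i j n * K j i)
      = ∑ a, ∑ b, boundaryPairTerm K G n a b := by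
  have trace_term : (∑ i, K i i) * (∑ b, G b n b) = -∑ a, ∑ b, K a a * G b b n := by
    simp only [sum_mul_sum, hG _ n, mul_neg, sum_neg_distrib]
  have contraction_term : ∑ i, ∑ j, G i j n * K j i = ∑ a, ∑ b, K a b * G b a n := by
    rw [sum_comm]
    simp only [mul_comm]
  rw [trace_term, contraction_term, sub_neg_eq_add]
  simp only [boundaryPairTerm, sum_add_distrib, sum_sub_distrib]

theorem boundaryPairTerm_normal_left {n b : ι} (hskew : G b n b = -G b b n) (hdiag : G b n n = 0) :
    boundaryPairTerm K G n n b = 0 := by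
  simp [boundaryPairTerm, hskew, hdiag]

theorem boundaryPairTerm_normal_right (a : ι) {n : ι} (hdiag : G n n n = 0) :
    boundaryPairTerm K G n a n = 0 := by
  simp [boundaryPairTerm, hdiag]

theorem boundaryPairTerm_self (n : ι) {a : ι} (hdiag : G a a a = 0) :
    boundaryPairTerm K G n a a = 0 := by
  simp [boundaryPairTerm, hdiag]

theorem sum_sum_boundaryPairTerm_eq_sum_erase [Fintype ι] [DecidableEq ι]
    (hG : ∀ i j b, G i j b = -G i b j) (hdiag : ∀ i j, G i j j = 0) (n : ι) :
    ∑ a, ∑ b, boundaryPairTerm K G n a b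
      = ∑ a ∈ univ.erase n, ∑ b ∈ (univ.erase n).erase a, boundaryPairTerm K G n a b := by
  have row_zero : ∑ b, boundaryPairTerm K G n n b = 0 :=
    sum_eq_zero fun b _ ↦ boundaryPairTerm_normal_left K (hG b n b) (hdiag b n)
  rw [← sum_erase (f := fun a ↦ ∑ b, boundaryPairTerm K G n a b) univ row_zero]
  refine sum_congr rfl fun a _ ↦ ?_
  rw [sum_erase _ (boundaryPairTerm_self K n (hdiag a a)),
    sum_erase _ (boundaryPairTerm_normal_right K a (hdiag n n))]

end PairTerm

theorem sum_sum_erase_add {ι R : Type*} [DecidableEq ι] [CommRing R] (s : Finset ι) (p q : ι → R) :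
    ∑ a ∈ s, ∑ b ∈ s.erase a, (p a + q b) = ((#s : R) - 1) * (∑ a ∈ s, p a + ∑ b ∈ s, q b) := by
  have inner_sum : ∀ a ∈ s, ∑ b ∈ s.erase a, (p a + q b)
      = (#s : R) * p a + ∑ b ∈ s, q b - (p a + q a) := fun a ha ↦ by
    rw [sum_erase_eq_sub ha, sum_add_distrib, sum_const, nsmul_eq_mul]
  rw [sum_congr rfl inner_sum, sum_sub_distrib, sum_add_distrib, sum_add_distrib, ← mul_sum,
    sum_const, nsmul_eq_mul]
  ring

theorem add_add_le_sum_univ {ι M : Type*} [Fintype ι] [AddCommMonoid M] [PartialOrder M]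
    [IsOrderedAddMonoid M] {f : ι → M} (hf : ∀ i, 0 ≤ f i) {a b c : ι}
    (hab : a ≠ b) (hac : a ≠ c) (hbc : b ≠ c) : f a + f b + f c ≤ ∑ i, f i := by
  classical
  calc f a + f b + f c = ∑ i ∈ {a, b, c}, f i := by
        rw [sum_insert (by simp [hab, hac]), sum_pair hbc, add_assoc]
    _ ≤ ∑ i, f i := sum_le_univ_sum_of_nonneg hf

section Estimate

variable {ι R : Type*} [Fintype ι] [Field R] [LinearOrder R] [IsStrictOrderedRing R]

theorem two_mul_sq_add_sq_add_sq_le_sum_sq_of_skew {M : ι → ι → R} (hM : ∀ j k, M j k = -M k j)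
    {a b c : ι} (hab : a ≠ b) (hac : a ≠ c) (hbc : b ≠ c) :
    2 * (M a b ^ 2 + M a c ^ 2 + M b c ^ 2) ≤ ∑ j, ∑ k, M j k ^ 2 := by
  have row_bound (j : ι) : M j a ^ 2 + M j b ^ 2 + M j c ^ 2 ≤ ∑ k, M j k ^ 2 :=
    add_add_le_sum_univ (fun k ↦ sq_nonneg (M j k)) hab hac hbc
  have sq_symm (j k : ι) : M j k ^ 2 = M k j ^ 2 := by rw [hM j k, neg_sq]
  calc 2 * (M a b ^ 2 + M a c ^ 2 + M b c ^ 2)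
      ≤ ∑ k, M a k ^ 2 + ∑ k, M b k ^ 2 + ∑ k, M c k ^ 2 := by
        linarith [row_bound a, row_bound b, row_bound c, sq_symm a b, sq_symm a c, sq_symm b c,
          sq_nonneg (M a a), sq_nonneg (M b b), sq_nonneg (M c c)]
    _ ≤ ∑ j, ∑ k, M j k ^ 2 :=
        add_add_le_sum_univ (fun j ↦ sum_nonneg fun k _ ↦ sq_nonneg (M j k)) hab hac hbc

theorem boundaryPairTerm_le (K : ι → ι → R) {G : ι → ι → ι → R}
    (hG : ∀ i j b, G i j b = -G i b j) {n a b : ι} (han : a ≠ n) (hbn : b ≠ n) (hab : a ≠ b) :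
    boundaryPairTerm K G n a b
      ≤ (1 / 2) * ∑ j, K a j ^ 2 + (1 / 4) * ∑ j, ∑ k, G b j k ^ 2 := by
  have young_normal := two_mul_le_add_sq (K a n) (G b a b)
  have young_diag := two_mul_le_add_sq (K a a) (G b b n)
  have young_mixed := two_mul_le_add_sq (K a b) (-G b a n)
  have K_bound : K a a ^ 2 + K a b ^ 2 + K a n ^ 2 ≤ ∑ j, K a j ^ 2 :=
    add_add_le_sum_univ (fun j ↦ sq_nonneg (K a j)) hab han hbn
  have G_bound : 2 * (G b a b ^ 2 + G b a n ^ 2 + G b b n ^ 2) ≤ ∑ j, ∑ k, G b j k ^ 2 :=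
    two_mul_sq_add_sq_add_sq_le_sum_sq_of_skew (hG b) hab han hbn
  rw [neg_sq] at young_mixed
  rw [boundaryPairTerm]
  linarith

theorem boundary_terms_sign_general [Nontrivial ι] (K : ι → ι → R) (G : ι → ι → ι → R)
    (hG : ∀ i j b, G i j b = -G i b j) (n : ι) :
    (∑ i, ∑ b, K i n * G b i b) - (∑ i, K i i) * (∑ b, G b n b) - (∑ i, ∑ j, G i j n * K j i)
      ≤ ((Fintype.card ι : R) - 2)
        * ((1 / 2) * (∑ i, ∑ j, K i j ^ 2) + (1 / 4) * (∑ i, ∑ j, ∑ b, G i j b ^ 2)) := by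
  classical
  have hdiag (i j : ι) : G i j j = 0 := self_eq_neg.mp (hG i j j)
  have card_tangential : (#(univ.erase n) : R) = Fintype.card ι - 1 := by
    rw [cast_card_erase_of_mem (mem_univ n), card_univ]
  have two_le_card : (2 : R) ≤ Fintype.card ι := by exact_mod_cast Fintype.one_lt_card (α := ι)
  set p : ι → R := fun a ↦ (1 / 2) * ∑ j, K a j ^ 2
  set q : ι → R := fun b ↦ (1 / 4) * ∑ j, ∑ k, G b j k ^ 2
  have p_nonneg (a : ι) : 0 ≤ p a := by positivity
  have q_nonneg (b : ι) : 0 ≤ q b := by positivity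
  rw [boundary_terms_eq_sum_boundaryPairTerm K hG, sum_sum_boundaryPairTerm_eq_sum_erase K hG hdiag]
  calc ∑ a ∈ univ.erase n, ∑ b ∈ (univ.erase n).erase a, boundaryPairTerm K G n a b
      ≤ ∑ a ∈ univ.erase n, ∑ b ∈ (univ.erase n).erase a, (p a + q b) :=
        sum_le_sum fun a ha ↦ sum_le_sum fun b hb ↦
          have ⟨hba, hbn⟩ := mem_erase.mp hb
          boundaryPairTerm_le K hG (ne_of_mem_erase ha) (ne_of_mem_erase hbn) hba.symm
    _ = ((Fintype.card ι : R) - 2) * (∑ a ∈ univ.erase n, p a + ∑ b ∈ univ.erase n, q b) := by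
        rw [sum_sum_erase_add, card_tangential]
        ring
    _ ≤ ((Fintype.card ι : R) - 2) * (∑ a, p a + ∑ b, q b) :=
        mul_le_mul_of_nonneg_left
          (add_le_add (sum_le_univ_sum_of_nonneg p_nonneg) (sum_le_univ_sum_of_nonneg q_nonneg))
          (sub_nonneg.mpr two_le_card)
    _ = _ := by rw [← mul_sum, ← mul_sum]

end Estimate

/-- favourable sign of the boundary terms in the energy estimate
(key step in Proposition 2.11). Index `3` of `{1,2,3}` is `(2 : Fin 3)`. -/
theorem boundary_terms_sign
    (K : Fin 3 → Fin 3 → ℝ) (G : Fin 3 → Fin 3 → Fin 3 → ℝ)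
    (hKsym : ∀ i j, K i j = K j i)
    (hGanti : ∀ i j b, G i j b = - G i b j) :
    (∑ i : Fin 3, ∑ b : Fin 3, K i 2 * G b i b)
      - (∑ i : Fin 3, K i i) * (∑ b : Fin 3, G b 2 b)
      - (∑ i : Fin 3, ∑ j : Fin 3, G i j 2 * K j i)
    ≤ (1 / 2) * (∑ i : Fin 3, ∑ j : Fin 3, (K i j) ^ 2)
      + (1 / 4) * (∑ i : Fin 3, ∑ j : Fin 3, ∑ b : Fin 3, (G i j b) ^ 2) := by
  have three_sub_two : ((Fintype.card (Fin 3) : ℝ) - 2) = 1 := by norm_num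
  simpa only [three_sub_two, one_mul] using boundary_terms_sign_general K G hGanti 2
end
end

section
/- First-order corner (compatibility) conditions (Lemma 3.4): let p ∈ ℝ⁴. Assume K_ij = K_ji and Γ_ijb = −Γ_ibj identically on ℝ⁴, and that (E-K) and (E-Γ) hold at p. Suppose that at p one has K_A3 = 0 and Γ_A3B = 0 for all A, B ∈ {1,2}, and that the tangential derivatives vanish at p: e_0 K_A3 = 0, e_B K_A3 = 0, e_0 Γ_A3B = 0 and e_C Γ_A3B = 0 for all A, B, C ∈ {1,2}. Then at p: (i) Σ_B e_3 Γ_BAB = Σ_B e_B Γ_3AB − Σ_{b,C} Γ_bbC Γ_3AC for each A ∈ {1,2} (b summed over {1,2,3}, B, C over {1,2}); (ii) e_3 K_22 = −2 Σ_C Γ_31C K_1C; (iii) e_3 K_11 = −2 Σ_C Γ_32C K_2C; (iv) e_3 K_12 = Σ_C Γ_31C K_2C + Σ_C Γ_32C K_1C, where C is summed over {1,2}. -/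
open scoped BigOperators

noncomputable section

/-! For symmetric `K` and antisymmetric `Γ`, the right-hand side of (E-Γ) is the Codazzi expression
`D̃_j K_bi − D̃_b K_ji` corrected by multiples of `R̂_j0` and `R̂_b0`, and off the diagonal the
right-hand side of (E-K) is minus the symmetrized `r̂_ij`. The boundary conditions kill all mixed
tangential-normal components of `K` and `Γ` together with their tangential derivatives, so
(E-K) for `K_A3` reduces to `r̂_3A = 0`, which is (i), and (E-Γ) for `Γ_A3B` reduces to
`e_3 K_AB − δ_AB Σ_C e_3 K_CC = Σ_C Γ_3AC K_BC + Σ_C Γ_3BC K_AC`,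
whose three independent components are (ii), (iii) and (iv). -/

/-- A metric connection `γ_ijb = -γ_ibj` on `n + 1` frame directions for which the hypersurface
orthogonal to the last one is totally geodesic: its second fundamental form `γ_AnB` vanishes.
The definition concerns the coefficients at one point, so it applies equally to their derivatives
along a tangential direction. -/
structure IsTotallyGeodesic {n : ℕ} (γ : Fin (n + 1) → Fin (n + 1) → Fin (n + 1) → ℝ) : Prop where
  antisymm : ∀ i j b, γ i j b = -γ i b j
  secondForm_eq_zero : ∀ A B : Fin n, γ A.castSucc (Fin.last n) B.castSucc = 0

namespace IsTotallyGeodesic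

variable {n : ℕ} {γ : Fin (n + 1) → Fin (n + 1) → Fin (n + 1) → ℝ}

theorem apply_self (hγ : IsTotallyGeodesic γ) (i j : Fin (n + 1)) : γ i j j = 0 :=
  self_eq_neg.mp (hγ.antisymm i j j)

theorem apply_castSucc_last (hγ : IsTotallyGeodesic γ) (A : Fin n) (c : Fin (n + 1)) :
    γ A.castSucc (Fin.last n) c = 0 := by
  induction c using Fin.lastCases with
  | last => exact hγ.apply_self _ _
  | cast B => exact hγ.secondForm_eq_zero A B

theorem apply_castSucc_right_last (hγ : IsTotallyGeodesic γ) (A : Fin n) (c : Fin (n + 1)) :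
    γ A.castSucc c (Fin.last n) = 0 := by
  rw [hγ.antisymm, hγ.apply_castSucc_last, neg_zero]

theorem apply_last_self (hγ : IsTotallyGeodesic γ) (b : Fin (n + 1)) :
    γ b (Fin.last n) b = 0 := by
  induction b using Fin.lastCases with
  | last => exact hγ.apply_self _ _
  | cast B => exact hγ.secondForm_eq_zero B B

theorem apply_self_last (hγ : IsTotallyGeodesic γ) (b : Fin (n + 1)) :
    γ b b (Fin.last n) = 0 := by
  rw [hγ.antisymm, hγ.apply_last_self, neg_zero]

theorem mul_apply_last_eq_zero (hγ : IsTotallyGeodesic γ) (j b c : Fin (n + 1)) :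
    γ b j c * γ c (Fin.last n) b = 0 := by
  induction c using Fin.lastCases with
  | cast C => rw [hγ.apply_castSucc_last, mul_zero]
  | last =>
    induction b using Fin.lastCases with
    | last => rw [hγ.apply_self (Fin.last n) (Fin.last n), mul_zero]
    | cast B => rw [hγ.apply_castSucc_right_last, zero_mul]

end IsTotallyGeodesic

theorem sum_eq_tangential_add_normal (g : Fin 3 → ℝ) :
    ∑ i, g i = ∑ A : Fin 2, g A.castSucc + g 2 :=
  Fin.sum_univ_castSucc g

section FrameDerivative

variable {f K : Fin 3 → Fin 3 → Pt → ℝ} {p : Pt}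

theorem fr_eq_fderiv (i : Fin 3) (u : Pt → ℝ) :
    fr f i u p = fderiv ℝ u p (∑ j : Fin 3, f i j p • Pi.single j.succ 1) := by
  simp only [fr, pd, map_sum, map_smul, smul_eq_mul]

theorem fr_fun_neg (i : Fin 3) (u : Pt → ℝ) : fr f i (fun q => -u q) p = -fr f i u p := by
  simp only [fr_eq_fderiv, fderiv_fun_neg, neg_apply]

theorem fr_fun_sum {ι : Type*} {s : Finset ι} {u : ι → Pt → ℝ} (i : Fin 3)
    (hu : ∀ k ∈ s, DifferentiableAt ℝ (u k) p) :
    fr f i (fun q => ∑ k ∈ s, u k q) p = ∑ k ∈ s, fr f i (u k) p := by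
  simp only [fr_eq_fderiv, fderiv_fun_sum hu, sum_apply]

theorem fr_trK (hK : ∀ c, DifferentiableAt ℝ (K c c) p) (i : Fin 3) :
    fr f i (trK K) p = ∑ c, fr f i (K c c) p :=
  fr_fun_sum i fun c _ => hK c

end FrameDerivative

section EvolutionEquations

variable {f K : Fin 3 → Fin 3 → Pt → ℝ} {G : Fin 3 → Fin 3 → Fin 3 → Pt → ℝ} {p : Pt}

theorem Rb0_eq_of_symm (hKsym : ∀ i j q, K i j q = K j i q) (j : Fin 3) :
    Rb0 f K G j p = (∑ c, fr f c (K c j) p) - (∑ c, ∑ l, G c c l p * K l j p)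
      - (∑ c, ∑ l, G c j l p * K c l p) - fr f j (trK K) p := by
  have hKfun (c : Fin 3) : K c j = K j c := funext (hKsym c j)
  simp only [Rb0, DtK, Finset.sum_sub_distrib, hKfun, hKsym _ j, fun c l => hKsym c l p]
  ring

theorem EG_iff_codazzi (hKsym : ∀ i j q, K i j q = K j i q) (i j b : Fin 3) :
    EG f K G i j b p ↔ pd 0 (G i j b) p + ∑ c, K i c p * G c j b p =
      DtK f K G j b i p - DtK f K G b j i p + kd i b * Rb0 f K G j p - kd i j * Rb0 f K G b p := by
  rw [EG, ← Rb0_eq_of_symm hKsym j, ← Rb0_eq_of_symm hKsym b, DtK, DtK]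
  constructor <;> intro h <;> linear_combination h

theorem rhat_eq_of_antisymm (hG : ∀ i j b, DifferentiableAt ℝ (G i j b) p)
    (hGanti : ∀ i j b, G i j b p = -G i b j p) (i j : Fin 3) :
    rhat f G i j p = (∑ b, fr f b (G i j b) p) - fr f i (fun q => ∑ b, G b j b q) p
      - (∑ b, ∑ c, G b i c p * G c j b p) - ∑ b, ∑ c, G b b c p * G i j c p := by
  have cancel : ∑ b, ∑ c, G i b c p * G c j b p = -∑ b, ∑ c, G i b c p * G b j c p := by
    rw [Finset.sum_comm]
    simp only [← Finset.sum_neg_distrib, ← neg_mul, ← hGanti i]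
  simp only [rhat, Rhat, sub_mul, Finset.sum_add_distrib, Finset.sum_sub_distrib, cancel,
    fr_fun_sum i fun b _ => hG b j b]
  ring

theorem EK_iff_ricci_of_ne (hG : ∀ i j b, DifferentiableAt ℝ (G i j b) p)
    (hGanti : ∀ i j b, G i j b p = -G i b j p) {i j : Fin 3} (hij : i ≠ j) :
    EK f K G i j p ↔ pd 0 (K i j) p + trK K p * K i j p =
      -(1 / 2) * (rhat f G i j p + rhat f G j i p) := by
  rw [EK, kd, if_neg hij, rhat_eq_of_antisymm hG hGanti, rhat_eq_of_antisymm hG hGanti]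
  constructor <;> intro h <;> linear_combination h

end EvolutionEquations

section Boundary

variable {f K : Fin 3 → Fin 3 → Pt → ℝ} {G : Fin 3 → Fin 3 → Fin 3 → Pt → ℝ} {p : Pt}

theorem rhat_tangential_normal (hG : ∀ i j b, DifferentiableAt ℝ (G i j b) p)
    (hGp : IsTotallyGeodesic fun i j b => G i j b p)
    (hdG : ∀ C : Fin 2, IsTotallyGeodesic fun i j b => fr f C.castSucc (G i j b) p)
    {A : Fin 2} (hdGnormal : fr f 2 (G A.castSucc 2 2) p = 0) : rhat f G A.castSucc 2 p = 0 := by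
  have divergence : ∑ b, fr f b (G A.castSucc 2 b) p = 0 := by
    rw [sum_eq_tangential_add_normal, hdGnormal, add_zero]
    exact Finset.sum_eq_zero fun B _ => (hdG B).secondForm_eq_zero A B
  have contraction : fr f A.castSucc (fun q => ∑ b, G b 2 b q) p = 0 := by
    rw [fr_fun_sum _ fun b _ => hG b 2 b]
    exact Finset.sum_eq_zero fun b _ => (hdG A).apply_last_self b
  have quadratic : ∑ b, ∑ c, G b A.castSucc c p * G c 2 b p = 0 :=
    Finset.sum_eq_zero fun b _ => Finset.sum_eq_zero fun c _ => hGp.mul_apply_last_eq_zero _ b c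
  have trace : ∑ b, ∑ c, G b b c p * G A.castSucc 2 c p = 0 :=
    Finset.sum_eq_zero fun b _ => Finset.sum_eq_zero fun c _ =>
      mul_eq_zero_of_right _ (hGp.apply_castSucc_last A c)
  rw [rhat_eq_of_antisymm hG hGp.antisymm, divergence, contraction, quadratic, trace]
  ring

theorem rhat_normal_tangential (hG : ∀ i j b, DifferentiableAt ℝ (G i j b) p)
    (hGp : IsTotallyGeodesic fun i j b => G i j b p) (A : Fin 2) :
    rhat f G 2 A.castSucc p =
      (∑ B : Fin 2, fr f B.castSucc (G 2 A.castSucc B.castSucc) p)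
        - (∑ B : Fin 2, fr f 2 (G B.castSucc A.castSucc B.castSucc) p)
        - ∑ b, ∑ C : Fin 2, G b b C.castSucc p * G 2 A.castSucc C.castSucc p := by
  have quadratic : ∑ b, ∑ c, G b 2 c p * G c A.castSucc b p = 0 :=
    Finset.sum_eq_zero fun b _ => Finset.sum_eq_zero fun c _ =>
      (mul_comm _ _).trans (hGp.mul_apply_last_eq_zero _ c b)
  have trace (b : Fin 3) : ∑ c, G b b c p * G 2 A.castSucc c p =
      ∑ C : Fin 2, G b b C.castSucc p * G 2 A.castSucc C.castSucc p := by
    have normal_eq_zero : G b b 2 p = 0 := hGp.apply_self_last b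
    rw [sum_eq_tangential_add_normal, normal_eq_zero, zero_mul, add_zero]
  rw [rhat_eq_of_antisymm hG hGp.antisymm, fr_fun_sum _ fun b _ => hG b A.castSucc b, quadratic]
  simp only [trace, sum_eq_tangential_add_normal fun b => fr f b (G 2 A.castSucc b) p,
    sum_eq_tangential_add_normal fun b => fr f 2 (G b A.castSucc b) p]
  ring

theorem DtK_normal_tangential (hKsym : ∀ i j q, K i j q = K j i q)
    (hKmixed : ∀ A : Fin 2, K A.castSucc 2 p = 0) (A B : Fin 2) :
    DtK f K G 2 B.castSucc A.castSucc p = fr f 2 (K B.castSucc A.castSucc) p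
      - (∑ C : Fin 2, G 2 B.castSucc C.castSucc p * K A.castSucc C.castSucc p)
      - ∑ C : Fin 2, G 2 A.castSucc C.castSucc p * K B.castSucc C.castSucc p := by
  simp only [DtK, sum_eq_tangential_add_normal, hKsym _ A.castSucc, hKmixed, mul_zero, add_zero]

theorem DtK_tangential_mixed (hKsym : ∀ i j q, K i j q = K j i q)
    (hKmixed : ∀ A : Fin 2, K A.castSucc 2 p = 0)
    (hdKmixed : ∀ A B : Fin 2, fr f B.castSucc (K A.castSucc 2) p = 0)
    (hGp : IsTotallyGeodesic fun i j b => G i j b p) (A B : Fin 2) :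
    DtK f K G B.castSucc 2 A.castSucc p = 0 := by
  have hKfun : K 2 A.castSucc = K A.castSucc 2 := funext (hKsym 2 A.castSucc)
  have hGrow (l : Fin 3) : G B.castSucc 2 l p = 0 := hGp.apply_castSucc_last B l
  have hGcol : G B.castSucc A.castSucc 2 p = 0 := hGp.apply_castSucc_right_last B _
  simp only [DtK, hKfun, hdKmixed, hGrow, sum_eq_tangential_add_normal, hKsym 2, hKmixed, hGcol,
    mul_zero, zero_mul, add_zero, sub_zero, Finset.sum_const_zero]

theorem DtK_normal_normal (hKsym : ∀ i j q, K i j q = K j i q)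
    (hKmixed : ∀ A : Fin 2, K A.castSucc 2 p = 0) (hGself : G 2 2 2 p = 0) :
    DtK f K G 2 2 2 p = fr f 2 (K 2 2) p := by
  simp only [DtK, sum_eq_tangential_add_normal, hKsym 2, hKmixed, hGself,
    mul_zero, zero_mul, add_zero, sub_zero, Finset.sum_const_zero]

theorem Rb0_normal (hK : ∀ c, DifferentiableAt ℝ (K c c) p)
    (hKsym : ∀ i j q, K i j q = K j i q) (hKmixed : ∀ A : Fin 2, K A.castSucc 2 p = 0)
    (hdKmixed : ∀ A B : Fin 2, fr f B.castSucc (K A.castSucc 2) p = 0)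
    (hGp : IsTotallyGeodesic fun i j b => G i j b p) :
    Rb0 f K G 2 p = -∑ C : Fin 2, fr f 2 (K C.castSucc C.castSucc) p := by
  simp only [Rb0, fr_trK hK, sum_eq_tangential_add_normal,
    DtK_tangential_mixed hKsym hKmixed hdKmixed hGp,
    DtK_normal_normal hKsym hKmixed (hGp.apply_self 2 2), Finset.sum_const_zero]
  ring

theorem fr_normal_K_tangential (hK : ∀ c, DifferentiableAt ℝ (K c c) p)
    (hKsym : ∀ i j q, K i j q = K j i q) (hKmixed : ∀ A : Fin 2, K A.castSucc 2 p = 0)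
    (hdKmixed : ∀ A B : Fin 2, fr f B.castSucc (K A.castSucc 2) p = 0)
    (hGp : IsTotallyGeodesic fun i j b => G i j b p) {A B : Fin 2}
    (hdtG : pd 0 (G A.castSucc 2 B.castSucc) p = 0) (hEG : EG f K G A.castSucc 2 B.castSucc p) :
    fr f 2 (K B.castSucc A.castSucc) p =
      (∑ C : Fin 2, G 2 B.castSucc C.castSucc p * K A.castSucc C.castSucc p)
        + (∑ C : Fin 2, G 2 A.castSucc C.castSucc p * K B.castSucc C.castSucc p)
        + kd A.castSucc B.castSucc * ∑ C : Fin 2, fr f 2 (K C.castSucc C.castSucc) p := by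
  have hGsecond (C : Fin 2) : G C.castSucc 2 B.castSucc p = 0 := hGp.secondForm_eq_zero C B
  have coupling : ∑ c, K A.castSucc c p * G c 2 B.castSucc p = 0 := by
    simp only [sum_eq_tangential_add_normal, hGsecond, hKmixed, mul_zero, zero_mul, add_zero,
      Finset.sum_const_zero]
  have off_diagonal : kd A.castSucc 2 = 0 := if_neg (Fin.castSucc_ne_last A)
  rw [EG_iff_codazzi hKsym, hdtG, coupling, off_diagonal, DtK_normal_tangential hKsym hKmixed,
    DtK_tangential_mixed hKsym hKmixed hdKmixed hGp,
    Rb0_normal hK hKsym hKmixed hdKmixed hGp] at hEG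
  linear_combination -hEG

theorem sum_fr_normal_G_tangential (hG : ∀ i j b, DifferentiableAt ℝ (G i j b) p)
    (hGp : IsTotallyGeodesic fun i j b => G i j b p)
    (hdG : ∀ C : Fin 2, IsTotallyGeodesic fun i j b => fr f C.castSucc (G i j b) p)
    {A : Fin 2} (hdGnormal : fr f 2 (G A.castSucc 2 2) p = 0) (hKmixed : K A.castSucc 2 p = 0)
    (hdtK : pd 0 (K A.castSucc 2) p = 0) (hEK : EK f K G A.castSucc 2 p) :
    ∑ B : Fin 2, fr f 2 (G B.castSucc A.castSucc B.castSucc) p =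
      (∑ B : Fin 2, fr f B.castSucc (G 2 A.castSucc B.castSucc) p)
        - ∑ b, ∑ C : Fin 2, G b b C.castSucc p * G 2 A.castSucc C.castSucc p := by
  have mixed_index : A.castSucc ≠ 2 := Fin.castSucc_ne_last A
  rw [EK_iff_ricci_of_ne hG hGp.antisymm mixed_index, hdtK, hKmixed,
    rhat_tangential_normal hG hGp hdG hdGnormal, rhat_normal_tangential hG hGp] at hEK
  linear_combination -2 * hEK

end Boundary

theorem corner_conditions_general
    {f K : Fin 3 → Fin 3 → Pt → ℝ} {G : Fin 3 → Fin 3 → Fin 3 → Pt → ℝ} {p : Pt}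
    (hK : ∀ c, DifferentiableAt ℝ (K c c) p) (hG : ∀ i j b, DifferentiableAt ℝ (G i j b) p)
    (hKsym : ∀ i j q, K i j q = K j i q) (hGanti : ∀ i j b q, G i j b q = -G i b j q)
    (hEK : ∀ A : Fin 2, EK f K G A.castSucc 2 p)
    (hEG : ∀ A B : Fin 2, EG f K G A.castSucc 2 B.castSucc p)
    (hbK : ∀ A : Fin 2, K A.castSucc 2 p = 0)
    (hbG : ∀ A B : Fin 2, G A.castSucc 2 B.castSucc p = 0)
    (htK0 : ∀ A : Fin 2, pd 0 (K A.castSucc 2) p = 0)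
    (htK : ∀ A B : Fin 2, fr f B.castSucc (K A.castSucc 2) p = 0)
    (htG0 : ∀ A B : Fin 2, pd 0 (G A.castSucc 2 B.castSucc) p = 0)
    (htG : ∀ A B C : Fin 2, fr f C.castSucc (G A.castSucc 2 B.castSucc) p = 0) :
    (∀ A : Fin 2,
      (∑ B : Fin 2, fr f 2 (G B.castSucc A.castSucc B.castSucc) p)
        = (∑ B : Fin 2, fr f B.castSucc (G 2 A.castSucc B.castSucc) p)
          - (∑ b : Fin 3, ∑ C : Fin 2, G b b C.castSucc p * G 2 A.castSucc C.castSucc p))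
    ∧ fr f 2 (K 1 1) p
        = -2 * (∑ C : Fin 2, G 2 0 C.castSucc p * K 0 C.castSucc p)
    ∧ fr f 2 (K 0 0) p
        = -2 * (∑ C : Fin 2, G 2 1 C.castSucc p * K 1 C.castSucc p)
    ∧ fr f 2 (K 0 1) p
        = (∑ C : Fin 2, G 2 0 C.castSucc p * K 1 C.castSucc p)
          + (∑ C : Fin 2, G 2 1 C.castSucc p * K 0 C.castSucc p) := by
  have hdGanti (a i j b) : fr f a (G i j b) p = -fr f a (G i b j) p := by
    rw [← fr_fun_neg, funext (hGanti i j b)]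
  have hGp : IsTotallyGeodesic fun i j b => G i j b p := ⟨fun i j b => hGanti i j b p, hbG⟩
  have hdG (C : Fin 2) : IsTotallyGeodesic fun i j b => fr f C.castSucc (G i j b) p :=
    ⟨hdGanti C.castSucc, fun A B => htG A B C⟩
  have hdGnormal (i) : fr f 2 (G i 2 2) p = 0 := self_eq_neg.mp (hdGanti 2 i 2 2)
  have hdK (A B : Fin 2) := fr_normal_K_tangential hK hKsym hbK htK hGp (htG0 A B) (hEG A B)
  have hdK₀₀ := hdK 0 0
  have hdK₁₁ := hdK 1 1
  have hdK₀₁ := hdK 1 0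
  refine ⟨fun A => sum_fr_normal_G_tangential hG hGp hdG (hdGnormal _) (hbK A) (htK0 A) (hEK A), ?_⟩
  simp only [Fin.sum_univ_two, kd, Fin.castSucc_zero, Fin.castSucc_one, if_true,
    one_ne_zero, if_false] at hdK₀₀ hdK₁₁ hdK₀₁ ⊢
  refine ⟨?_, ?_, ?_⟩
  · linear_combination -hdK₀₀
  · linear_combination -hdK₁₁
  · linear_combination hdK₀₁

/-- Lemma 3.4: first-order corner (compatibility) conditions.
Indices `1,2` of `{1,2,3}` are `(0 : Fin 3)`, `(1 : Fin 3)`; index `3` is `(2 : Fin 3)`;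
indices ranging over `{1,2}` are encoded by `Fin 2` via `Fin.castSucc`. -/
theorem corner_conditions
    (f K : Fin 3 → Fin 3 → Pt → ℝ) (G : Fin 3 → Fin 3 → Fin 3 → Pt → ℝ)
    (hf : ∀ i j, ContDiff ℝ (⊤ : ℕ∞) (f i j))
    (hK : ∀ i j, ContDiff ℝ (⊤ : ℕ∞) (K i j)) (hG : ∀ i j b, ContDiff ℝ (⊤ : ℕ∞) (G i j b))
    (p : Pt)
    (hKsym : ∀ (i j : Fin 3) (q : Pt), K i j q = K j i q)
    (hGanti : ∀ (i j b : Fin 3) (q : Pt), G i j b q = - G i b j q)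
    (hEK : ∀ i j : Fin 3, EK f K G i j p)
    (hEG : ∀ i j b : Fin 3, EG f K G i j b p)
    (hbK : ∀ A : Fin 2, K A.castSucc 2 p = 0)
    (hbG : ∀ A B : Fin 2, G A.castSucc 2 B.castSucc p = 0)
    (htK0 : ∀ A : Fin 2, pd 0 (K A.castSucc 2) p = 0)
    (htK : ∀ A B : Fin 2, fr f B.castSucc (K A.castSucc 2) p = 0)
    (htG0 : ∀ A B : Fin 2, pd 0 (G A.castSucc 2 B.castSucc) p = 0)
    (htG : ∀ A B C : Fin 2, fr f C.castSucc (G A.castSucc 2 B.castSucc) p = 0) :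
    (∀ A : Fin 2,
      (∑ B : Fin 2, fr f 2 (G B.castSucc A.castSucc B.castSucc) p)
        = (∑ B : Fin 2, fr f B.castSucc (G 2 A.castSucc B.castSucc) p)
          - (∑ b : Fin 3, ∑ C : Fin 2, G b b C.castSucc p * G 2 A.castSucc C.castSucc p))
    ∧ fr f 2 (K 1 1) p
        = -2 * (∑ C : Fin 2, G 2 0 C.castSucc p * K 0 C.castSucc p)
    ∧ fr f 2 (K 0 0) p
        = -2 * (∑ C : Fin 2, G 2 1 C.castSucc p * K 1 C.castSucc p)
    ∧ fr f 2 (K 0 1) p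
        = (∑ C : Fin 2, G 2 0 C.castSucc p * K 1 C.castSucc p)
          + (∑ C : Fin 2, G 2 1 C.castSucc p * K 0 C.castSucc p) :=
  corner_conditions_general (fun c => (hK c c).differentiable (by simp) p)
    (fun i j b => (hG i j b).differentiable (by simp) p) hKsym hGanti
    (fun A => hEK A.castSucc 2) (fun A B => hEG A.castSucc 2 B.castSucc)
    hbK hbG htK0 htK htG0 htG
end
end

section
/- Three-dimensional cyclic curvature identity (first identity of Lemma 4.3, algebraic form): let T : {1,2,3}⁴ → ℝ satisfy T_aijb = −T_iajb and T_aijb = −T_aibj for all indices, and define t_bi := Σ_a T_abia. Then for all a, b, i, j ∈ {1,2,3}: T_abij + T_biaj + T_iabj = (t_ia − t_ai) δ_bj + (t_bi − t_ib) δ_aj + (t_ab − t_ba) δ_ij. -/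
open scoped BigOperators

noncomputable section

/-! For an array skew in its first two indices, the cyclic sum of the first three indices is skew in
all of them. A skew array with at least as many indices as there are index values satisfies the
Schouten identity: skew-symmetrizing over one further index gives zero. Contracting that identity
against the fourth index writes the cyclic sum as Kronecker deltas times its own contractions, and
these are differences of Ricci contractions. -/

section SkewArray

variable {ι κ M : Type*} [DecidableEq κ]

/-- A completely skew-symmetric array with index slots `κ`, index values `ι` and entries in `M`.
An additional index without symmetry is accommodated by taking vectors as entries. -/
def IsSkewArray [Neg M] (ω : (κ → ι) → M) : Prop :=
  ∀ (v : κ → ι) (p q : κ), p ≠ q → ω (v ∘ Equiv.swap p q) = -ω v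

namespace IsSkewArray

theorem update_eq_neg_update [Neg M] {ω : (κ → ι) → M} (hω : IsSkewArray ω) {v : κ → ι}
    {p q : κ} (hpq : p ≠ q) (hv : v p = v q) (c : ι) :
    ω (Function.update v p c) = -ω (Function.update v q c) := by
  have comp_swap : v ∘ Equiv.swap p q = v := funext (Equiv.apply_swap_eq_self hv)
  rw [← hω _ p q hpq, Function.update_comp_equiv, comp_swap, Equiv.symm_swap,
    Equiv.swap_apply_right]

variable [AddCommGroup M] [IsAddTorsionFree M] {ω : (κ → ι) → M}

theorem eq_zero_of_eq (hω : IsSkewArray ω) {v : κ → ι} {p q : κ} (hpq : p ≠ q)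
    (hv : v p = v q) : ω v = 0 := by
  have comp_swap : v ∘ Equiv.swap p q = v := funext (Equiv.apply_swap_eq_self hv)
  rw [← self_eq_neg, ← hω v p q hpq, comp_swap]

theorem update_eq_zero (hω : IsSkewArray ω) {v : κ → ι} {p q k : κ} (hpq : p ≠ q)
    (hv : v p = v q) (hp : k ≠ p) (hq : k ≠ q) (c : ι) : ω (Function.update v k c) = 0 :=
  hω.eq_zero_of_eq hpq <| by
    rw [Function.update_of_ne hp.symm, Function.update_of_ne hq.symm, hv]

variable [Fintype ι] [DecidableEq ι] [Fintype κ]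

theorem schouten_identity (hω : IsSkewArray ω) (hcard : Fintype.card ι ≤ Fintype.card κ)
    (v : κ → ι) (c j : ι) :
    (if c = j then ω v else 0) = ∑ k, if v k = j then ω (Function.update v k c) else 0 := by
  by_cases hv : Function.Injective v
  · obtain ⟨k, rfl⟩ := (hv.bijective_of_nat_card_le (by simpa using hcard)).surjective c
    rw [Fintype.sum_eq_single k, Function.update_eq_self]
    intro l hl
    rw [hω.eq_zero_of_eq hl (by simp [hl.symm]), ite_self]
  · obtain ⟨p, q, hvpq, hpq⟩ := Function.not_injective_iff.mp hv
    rw [Fintype.sum_eq_add p q hpq, hω.eq_zero_of_eq hpq hvpq,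
      hω.update_eq_neg_update hpq hvpq, hvpq]
    · split_ifs <;> simp
    · rintro k ⟨hkp, hkq⟩
      rw [hω.update_eq_zero hpq hvpq hkp hkq, ite_self]

theorem eq_sum_contraction {F : (κ → ι) → ι → M} (hF : IsSkewArray F)
    (hcard : Fintype.card ι ≤ Fintype.card κ) (v : κ → ι) (j : ι) :
    F v j = ∑ k, if v k = j then ∑ c, F (Function.update v k c) c else 0 := by
  have schouten_apply (c : ι) :
      (if c = j then F v c else 0) = ∑ k, if v k = j then F (Function.update v k c) c else 0 := by
    simpa [ite_apply] using congrFun (hF.schouten_identity hcard v c j) c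
  calc
    F v j = ∑ c, if c = j then F v c else 0 := by simp
    _ = ∑ c, ∑ k, if v k = j then F (Function.update v k c) c else 0 :=
      Fintype.sum_congr _ _ schouten_apply
    _ = ∑ k, if v k = j then ∑ c, F (Function.update v k c) c else 0 := by
      rw [Finset.sum_comm]
      simp only [Finset.sum_ite_irrel, Finset.sum_const_zero]

end IsSkewArray

end SkewArray

section CyclicSum

variable {ι M : Type*} [AddCommGroup M]

/-- The Ricci contraction `t_bi = Σ_a T_abia`. -/
def ricciContraction [Fintype ι] (T : ι → ι → ι → ι → M) (b i : ι) : M := ∑ a, T a b i a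

/-- The cyclic sum over the first three indices, whose vanishing is the first Bianchi identity. -/
def cyclicSum (T : ι → ι → ι → ι → M) (a b i j : ι) : M := T a b i j + T b i a j + T i a b j

theorem cyclicSum_rotate (T : ι → ι → ι → ι → M) (a b i j : ι) :
    cyclicSum T b i a j = cyclicSum T a b i j := by
  unfold cyclicSum
  abel

variable {T : ι → ι → ι → ι → M}

theorem cyclicSum_swap (hT : ∀ a i j b, T a i j b = -T i a j b) (a b i j : ι) :
    cyclicSum T b a i j = -cyclicSum T a b i j := by
  unfold cyclicSum
  rw [hT b a, hT a i, hT i b]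
  abel

theorem isSkewArray_cyclicSum (hT : ∀ a i j b, T a i j b = -T i a j b) :
    IsSkewArray fun v : Fin 3 → ι ↦ cyclicSum T (v 0) (v 1) (v 2) := by
  intro v p q hpq
  have swap₀₁ : cyclicSum T (v 1) (v 0) (v 2) = -cyclicSum T (v 0) (v 1) (v 2) :=
    funext fun j ↦ cyclicSum_swap hT _ _ _ j
  have swap₁₂ : cyclicSum T (v 0) (v 2) (v 1) = -cyclicSum T (v 0) (v 1) (v 2) :=
    funext fun j ↦ by
      rw [← cyclicSum_rotate, cyclicSum_swap hT, cyclicSum_rotate T (v 0), Pi.neg_apply]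
  have swap₀₂ : cyclicSum T (v 2) (v 1) (v 0) = -cyclicSum T (v 0) (v 1) (v 2) :=
    funext fun j ↦ by
      rw [cyclicSum_swap hT, cyclicSum_rotate T (v 0), Pi.neg_apply]
  fin_cases p <;> fin_cases q <;> simp_all [Equiv.swap_apply_def]

theorem sum_cyclicSum_eq_ricciContraction_sub [Fintype ι]
    (hT : ∀ a i j b, T a i j b = -T i a j b) (htr : ∀ a i, ∑ c, T a i c c = 0) (b i : ι) :
    ∑ c, cyclicSum T c b i c = ricciContraction T b i - ricciContraction T i b := by
  simp only [cyclicSum, ricciContraction, Finset.sum_add_distrib, htr, hT i,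
    Finset.sum_neg_distrib]
  abel

theorem cyclic_curvature_identity_general [Fintype ι] [DecidableEq ι] [IsAddTorsionFree M]
    (hcard : Fintype.card ι ≤ 3) (hT : ∀ a i j b, T a i j b = -T i a j b)
    (htr : ∀ a i, ∑ c, T a i c c = 0) (a b i j : ι) :
    cyclicSum T a b i j
      = (if b = j then ricciContraction T i a - ricciContraction T a i else 0)
        + (if a = j then ricciContraction T b i - ricciContraction T i b else 0)
        + (if i = j then ricciContraction T a b - ricciContraction T b a else 0) := by
  have slot₁ (c : ι) : cyclicSum T a c i c = cyclicSum T c i a c := (cyclicSum_rotate ..).symm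
  have slot₂ (c : ι) : cyclicSum T a b c c = cyclicSum T c a b c := cyclicSum_rotate ..
  have contraction : cyclicSum T a b i j
      = (if a = j then ∑ c, cyclicSum T c b i c else 0)
        + (if b = j then ∑ c, cyclicSum T c i a c else 0)
        + (if i = j then ∑ c, cyclicSum T c a b c else 0) := by
    simpa [Fin.sum_univ_three, Function.update, slot₁, slot₂] using
      (isSkewArray_cyclicSum hT).eq_sum_contraction (by simpa using hcard) ![a, b, i] j
  simp only [contraction, sum_cyclicSum_eq_ricciContraction_sub hT htr]
  abel

end CyclicSum

/-- first identity of Lemma 4.3, algebraic form: the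
three-dimensional cyclic curvature identity. Here `t b i = Σ_a T a b i a`. -/
theorem cyclic_curvature_identity
    (T : Fin 3 → Fin 3 → Fin 3 → Fin 3 → ℝ)
    (h1 : ∀ a i j b, T a i j b = - T i a j b)
    (h2 : ∀ a i j b, T a i j b = - T a i b j) :
    ∀ a b i j : Fin 3,
      T a b i j + T b i a j + T i a b j
        = ((∑ c : Fin 3, T c i a c) - (∑ c : Fin 3, T c a i c)) * kd b j
          + ((∑ c : Fin 3, T c b i c) - (∑ c : Fin 3, T c i b c)) * kd a j
          + ((∑ c : Fin 3, T c a b c) - (∑ c : Fin 3, T c b a c)) * kd i j := by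
  intro a b i j
  have trace_eq_zero (a i : Fin 3) : ∑ c, T a i c c = 0 :=
    Finset.sum_eq_zero fun c _ ↦ self_eq_neg.mp (h2 a i c c)
  simpa [cyclicSum, ricciContraction, kd] using
    cyclic_curvature_identity_general (by simp) h1 trace_eq_zero a b i j
end
end
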